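/- For every (x,y) ∈ ℝ² with x ≥ 0 and (x,y) ≠ (0,0), PSF(x,y) = (1/(2π))·∫₀^{2π} f⁺(Φ − φ_{x,y})·χ⁺(β⁻¹·√(x²+y²)·cos Φ) dΦ, where φ_{x,y} = arccos(y/√(x²+y²)). (Proposition 3, Point Spread Function of the Imaging Algorithm.) -/

import Mathlib

open Real intervalIntegral

/-!
With `r` and `φ` the modulus and the argument of `y + i x`,
`-x sin Φ + y cos Φ = Re ((y + i x) exp (i Φ)) = r cos (Φ + φ)`,
and shifting `Φ` by `φ` does not change an integral over a full period. The half-plane `0 ≤ x` is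
the closed upper half-plane for `y + i x`, where `φ = arccos (y / r)`.
-/

theorem norm_mul_cos_add_arg (z : ℂ) (θ : ℝ) :
    ‖z‖ * cos (θ + z.arg) = -z.im * sin θ + z.re * cos θ := by
  calc ‖z‖ * cos (θ + z.arg)
      = -(‖z‖ * sin z.arg) * sin θ + ‖z‖ * cos z.arg * cos θ := by rw [cos_add]; ring
    _ = -z.im * sin θ + z.re * cos θ := by
      rw [Complex.norm_mul_sin_arg, Complex.norm_mul_cos_arg]

theorem arg_mk_eq_arccos {x y : ℝ} (hx : 0 ≤ x) (hxy : (x, y) ≠ (0, 0)) :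
    Complex.arg ⟨y, x⟩ = arccos (y / √(x ^ 2 + y ^ 2)) := by
  have ne_zero : (⟨y, x⟩ : ℂ) ≠ 0 := fun h ↦
    hxy (Prod.ext (congrArg Complex.im h) (congrArg Complex.re h))
  rw [Complex.arg_of_im_nonneg_of_ne_zero hx ne_zero, Complex.norm_eq_sqrt_sq_add_sq,
    add_comm (x ^ 2)]

section

variable {E : Type*} [NormedAddCommGroup E] [NormedSpace ℝ E]

theorem integral_comp_sub_right_of_periodic {g : ℝ → E} {T : ℝ} (hg : Function.Periodic g T)
    (t c : ℝ) : ∫ s in t..t + T, g (s - c) = ∫ s in t..t + T, g s := by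
  rw [integral_comp_sub_right, add_sub_right_comm]
  exact hg.intervalIntegral_add_eq (t - c) t

theorem psf_formula_general {F : ℝ → ℝ → E} (hF : Function.Periodic F (2 * π)) (x y : ℝ) :
    ∫ Φ in 0..2 * π, F Φ (-x * sin Φ + y * cos Φ) =
      ∫ Φ in 0..2 * π, F (Φ - Complex.arg ⟨y, x⟩) (√(x ^ 2 + y ^ 2) * cos Φ) := by
  have norm_eq : ‖(⟨y, x⟩ : ℂ)‖ = √(x ^ 2 + y ^ 2) := by
    rw [Complex.norm_eq_sqrt_sq_add_sq, add_comm]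
  have rotation (Φ : ℝ) :
      -x * sin Φ + y * cos Φ = √(x ^ 2 + y ^ 2) * cos (Φ + Complex.arg ⟨y, x⟩) := by
    rw [← norm_eq, norm_mul_cos_add_arg]
  have periodic :
      Function.Periodic (fun Φ ↦ F Φ (-x * sin Φ + y * cos Φ)) (2 * π) := fun Φ ↦ by
    simp only [hF Φ, sin_add_two_pi, cos_add_two_pi]
  have shift := integral_comp_sub_right_of_periodic periodic 0 (Complex.arg ⟨y, x⟩)
  simpa only [zero_add, rotation, sub_add_cancel] using shift.symm

end

/-- **Proposition 3 (Point Spread Function of the Imaging Algorithm).**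
With `PSF(x,y) = (1/(2π))·∫₀^{2π} f⁺(Φ)·χ⁺(D_f(x,y;Φ)) dΦ`, where
`D_f(x,y;Φ) = β⁻¹·(−x sin Φ + y cos Φ)`, for every `(x,y)` with `x ≥ 0` and
`(x,y) ≠ (0,0)` one has
`PSF(x,y) = (1/(2π))·∫₀^{2π} f⁺(Φ − φ_{x,y})·χ⁺(β⁻¹·√(x²+y²)·cos Φ) dΦ`,
where `φ_{x,y} = arccos(y/√(x²+y²))`. -/
theorem psf_formula
    (β : ℝ) (hβ : 0 < β)
    (fplus χplus : ℝ → ℝ)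
    (hf : Continuous fplus) (hfper : Function.Periodic fplus (2 * π))
    (hχ : Continuous χplus) (hχ0 : χplus 0 = 1)
    (PSF : ℝ → ℝ → ℝ)
    (hPSF : ∀ x y : ℝ,
      PSF x y = (1 / (2 * π)) *
        ∫ Φ in (0 : ℝ)..(2 * π),
          fplus Φ * χplus (β⁻¹ * (-x * Real.sin Φ + y * Real.cos Φ)))
    (x y : ℝ) (hx : 0 ≤ x) (hxy : (x, y) ≠ (0, 0)) :
    PSF x y = (1 / (2 * π)) *
      ∫ Φ in (0 : ℝ)..(2 * π),
        fplus (Φ - Real.arccos (y / Real.sqrt (x ^ 2 + y ^ 2))) *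
          χplus (β⁻¹ * Real.sqrt (x ^ 2 + y ^ 2) * Real.cos Φ) := by
  rw [hPSF, psf_formula_general (F := fun Φ t ↦ fplus Φ * χplus (β⁻¹ * t))
    (fun Φ ↦ by simp only [hfper Φ]) x y, arg_mk_eq_arccos hx hxy]
  simp only [mul_assoc]
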